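/- arXiv:1311.7449 — 2 statements merged into one kernel-verified Lean document; each statement's English description precedes it below -/
import Mathlib

section
/- Let n, θ be integers with 2 ≤ θ ≤ n−1. For p ∈ [0,1] define s_0(p) = p and s_t(p) = φ_{n,p,θ}(s_{t−1}(p)) for t ≥ 1, and let s_∞(p) := lim_{t→∞} s_t(p). Then there exists p_c ∈ (0,1) such that s_∞(p) = 1 for every p with p_c < p ≤ 1, and s_∞(p) < 1 for every p with 0 ≤ p < p_c. -/
/-- `φ_{n,p,θ}(x) = p + (1-p) * ∑_{k=θ}^{n} C(n,k) x^k (1-x)^{n-k}`. -/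
noncomputable def phiBP (n θ : ℕ) (p x : ℝ) : ℝ :=
  p + (1 - p) * ∑ k ∈ Finset.Icc θ n, (n.choose k : ℝ) * x ^ k * (1 - x) ^ (n - k)

/-- The pair `(x_t, y_t)` of the coupled iteration
`x_0 = y_0 = p`, `x_t = φ_{a,p,θ}(y_{t-1})`, `y_t = φ_{b,p,θ}(x_{t-1})`. -/
noncomputable def xyBP (a b θ : ℕ) (p : ℝ) : ℕ → ℝ × ℝ
  | 0 => (p, p)
  | t + 1 => (phiBP a θ p (xyBP a b θ p t).2, phiBP b θ p (xyBP a b θ p t).1)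

/-- `x_t`. -/
noncomputable def xBP (a b θ : ℕ) (p : ℝ) (t : ℕ) : ℝ := (xyBP a b θ p t).1

/-- `y_t`. -/
noncomputable def yBP (a b θ : ℕ) (p : ℝ) (t : ℕ) : ℝ := (xyBP a b θ p t).2

/-- The one-dimensional iteration `s_0 = p`, `s_t = φ_{n,p,θ}(s_{t-1})`. -/
noncomputable def sBP (n θ : ℕ) (p : ℝ) : ℕ → ℝ
  | 0 => p
  | t + 1 => phiBP n θ p (sBP n θ p t)

/-!
Write `φ_p(x) = p + (1 - p) F(x)` with `F(x) = P(Bin(n, x) ≥ θ)`, and let `p_c` be the infimum of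
the seed densities `p` for which the graph of `φ_p` lies on or above the diagonal.
Below `p_c` there is an `x ≤ 1` with `φ_p(x) < x`, and monotonicity traps the orbit of `p` under
`φ_p(x) < 1`. Above `p_c` pick `q < p` with `φ_q` above the diagonal: then
`1 - φ_p(x) = (1 - p) / (1 - q) * (1 - φ_q(x)) ≤ (1 - p) / (1 - q) * (1 - x)`,
so the distance to `1` decays geometrically.
Finally `p_c < 1` because `1 - F(x) ≤ 1 - x ^ n ≤ n (1 - x)`, and `p_c > 0` because `F'(0) = 0`
puts `F = φ_0` strictly below the diagonal near `0`.
-/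

open Filter Set Topology Polynomial

section Iteration

theorem exists_tendsto_iterate_of_monotoneOn_Icc {α : Type*} [ConditionallyCompleteLattice α]
    [TopologicalSpace α] [SupConvergenceClass α] {f : α → α} {a b : α}
    (hf : MonotoneOn f (Icc a b)) (hab : a ≤ b) (ha : a ≤ f a) (hb : f b ≤ b) :
    ∃ L ≤ b, Tendsto (fun t => f^[t] a) atTop (𝓝 L) := by
  have hmaps : MapsTo f (Icc a b) (Icc a b) := fun x hx =>
    ⟨ha.trans (hf (left_mem_Icc.2 hab) hx hx.1), (hf hx (right_mem_Icc.2 hab) hx.2).trans hb⟩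
  have hmem (t : ℕ) : f^[t] a ∈ Icc a b := hmaps.iterate t (left_mem_Icc.2 hab)
  have hmono : Monotone fun t => f^[t] a := by
    refine monotone_nat_of_le_succ fun t => ?_
    induction t with
    | zero => exact ha
    | succ t ih =>
      simpa only [Function.iterate_succ_apply'] using hf (hmem t) (hmem (t + 1)) ih
  exact ⟨⨆ t, f^[t] a, ciSup_le fun t => (hmem t).2,
    tendsto_atTop_ciSup hmono ⟨b, forall_mem_range.2 fun t => (hmem t).2⟩⟩

theorem tendsto_iterate_of_dist_le_mul {X : Type*} [PseudoMetricSpace X] {f : X → X} {s : Set X}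
    {x c : X} {r : ℝ} (hr₀ : 0 ≤ r) (hr₁ : r < 1) (hs : MapsTo f s s)
    (hf : ∀ y ∈ s, dist (f y) c ≤ r * dist y c) (hx : x ∈ s) :
    Tendsto (fun t => f^[t] x) atTop (𝓝 c) := by
  have hgeom (t : ℕ) : dist (f^[t] x) c ≤ r ^ t * dist x c :=
    le_geom (u := fun t => dist (f^[t] x) c) hr₀ t fun k _ => by
      simpa only [Function.iterate_succ_apply'] using hf _ (hs.iterate k hx)
  refine tendsto_iff_dist_tendsto_zero.2 (squeeze_zero (fun _ => dist_nonneg) hgeom ?_)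
  simpa only [zero_mul] using (tendsto_pow_atTop_nhds_zero_of_lt_one hr₀ hr₁).mul_const (dist x c)

theorem eventually_lt_self_of_hasDerivWithinAt {f : ℝ → ℝ} {f' a : ℝ}
    (hf : HasDerivWithinAt f f' (Ioi a) a) (hf' : f' < 1) (ha : f a ≤ a) :
    ∀ᶠ x in 𝓝[>] a, f x < x := by
  filter_upwards [hf.limsup_slope_le' self_notMem_Ioi hf', self_mem_nhdsWithin] with x hslope hx
  rw [slope_def_field, div_lt_one (sub_pos.2 hx)] at hslope
  linarith

end Iteration

/-- The mean-field update of an activation process with seed density `p`: a site is active if it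
is a seed or, failing that, if its neighbours, active with probability `x`, activate it, which
they do with probability `F x`. -/
def seedUpdate (F : ℝ → ℝ) (p x : ℝ) : ℝ := p + (1 - p) * F x

/-- The seed densities `p` for which the graph of `seedUpdate F p` lies on or above the diagonal,
so that no `x` blocks the iteration. -/
def unblockedSeeds (F : ℝ → ℝ) : Set ℝ :=
  {p ∈ Icc (0 : ℝ) 1 | ∀ x ∈ Icc (0 : ℝ) 1, x ≤ seedUpdate F p x}

/-- The critical density of the iteration of `seedUpdate F p`, as the infimum of the unblocked
densities. -/
noncomputable def criticalSeed (F : ℝ → ℝ) : ℝ := sInf (unblockedSeeds F)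

section SeedUpdate

variable {F : ℝ → ℝ} {p : ℝ}

theorem one_sub_seedUpdate (F : ℝ → ℝ) (p x : ℝ) :
    1 - seedUpdate F p x = (1 - p) * (1 - F x) := by
  unfold seedUpdate
  ring

theorem mapsTo_seedUpdate (hF : MapsTo F (Icc 0 1) (Icc 0 1)) (hp : p ∈ Icc (0 : ℝ) 1) :
    MapsTo (seedUpdate F p) (Icc 0 1) (Icc p 1) := by
  intro x hx
  have h₀ : 0 ≤ (1 - p) * F x := mul_nonneg (sub_nonneg.2 hp.2) (hF hx).1
  have h₁ : 0 ≤ (1 - p) * (1 - F x) := mul_nonneg (sub_nonneg.2 hp.2) (sub_nonneg.2 (hF hx).2)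
  exact ⟨le_add_of_nonneg_right h₀, sub_nonneg.1 (one_sub_seedUpdate F p x ▸ h₁)⟩

theorem monotoneOn_seedUpdate {s : Set ℝ} (hF : MonotoneOn F s) (hp : p ≤ 1) :
    MonotoneOn (seedUpdate F p) s := fun _ hx _ hy hxy =>
  add_le_add_right (mul_le_mul_of_nonneg_left (hF hx hy hxy) (sub_nonneg.2 hp)) p

theorem bddBelow_unblockedSeeds (F : ℝ → ℝ) : BddBelow (unblockedSeeds F) :=
  ⟨0, fun _ hp => hp.1.1⟩

theorem one_sub_inv_mem_unblockedSeeds {K : ℝ} (hK : 1 ≤ K)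
    (hF : ∀ x ∈ Icc (0 : ℝ) 1, 1 - F x ≤ K * (1 - x)) : 1 - K⁻¹ ∈ unblockedSeeds F := by
  have hK₀ : 0 < K := one_pos.trans_le hK
  refine ⟨⟨sub_nonneg.2 (inv_le_one_of_one_le₀ hK), sub_le_self 1 (inv_nonneg.2 hK₀.le)⟩,
    fun x hx => ?_⟩
  have h : 1 - seedUpdate F (1 - K⁻¹) x ≤ 1 - x := by
    rw [one_sub_seedUpdate, sub_sub_cancel]
    exact (inv_mul_le_iff₀ hK₀).2 (hF x hx)
  linarith

theorem criticalSeed_lt_one {K : ℝ} (hK : 1 ≤ K)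
    (hF : ∀ x ∈ Icc (0 : ℝ) 1, 1 - F x ≤ K * (1 - x)) : criticalSeed F < 1 :=
  (csInf_le (bddBelow_unblockedSeeds F) (one_sub_inv_mem_unblockedSeeds hK hF)).trans_lt
    (sub_lt_self 1 (inv_pos.2 (one_pos.trans_le hK)))

theorem criticalSeed_pos (hne : (unblockedSeeds F).Nonempty) {x : ℝ} (hx : x ∈ Icc (0 : ℝ) 1)
    (hFx : F x < x) : 0 < criticalSeed F := by
  have hFx₁ : 0 < 1 - F x := sub_pos.2 (hFx.trans_le hx.2)
  refine (div_pos (sub_pos.2 hFx) hFx₁).trans_le (le_csInf hne fun p hp => ?_)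
  have h : x ≤ p + (1 - p) * F x := hp.2 x hx
  rw [div_le_iff₀ hFx₁]
  linarith

theorem tendsto_iterate_seedUpdate_of_criticalSeed_lt (hF : MapsTo F (Icc 0 1) (Icc 0 1))
    (hne : (unblockedSeeds F).Nonempty) (hp : criticalSeed F < p) (hp₁ : p ≤ 1) :
    Tendsto (fun t => (seedUpdate F p)^[t] p) atTop (𝓝 1) := by
  obtain ⟨q, hq, hqp⟩ := exists_lt_of_csInf_lt hne hp
  have hpI : p ∈ Icc (0 : ℝ) 1 := ⟨hq.1.1.trans hqp.le, hp₁⟩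
  have hmaps := mapsTo_seedUpdate hF hpI
  have hq₁ : 0 < 1 - q := sub_pos.2 (hqp.trans_le hp₁)
  have hr₀ : 0 ≤ (1 - p) / (1 - q) := div_nonneg (sub_nonneg.2 hp₁) hq₁.le
  refine tendsto_iterate_of_dist_le_mul hr₀ ((div_lt_one hq₁).2 (by linarith))
    (hmaps.mono_right (Icc_subset_Icc_left hpI.1)) (fun x hx => ?_) hpI
  rw [dist_comm, dist_comm x, Real.dist_eq, Real.dist_eq, abs_of_nonneg (sub_nonneg.2 hx.2),
    abs_of_nonneg (sub_nonneg.2 (hmaps hx).2)]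
  calc 1 - seedUpdate F p x = (1 - p) / (1 - q) * (1 - seedUpdate F q x) := by
        rw [one_sub_seedUpdate, one_sub_seedUpdate]
        field_simp
    _ ≤ (1 - p) / (1 - q) * (1 - x) := by
        gcongr
        exact hq.2 x hx

theorem exists_tendsto_iterate_seedUpdate_of_lt_criticalSeed (hF : MapsTo F (Icc 0 1) (Icc 0 1))
    (hmono : MonotoneOn F (Icc 0 1)) (hp : p ∈ Icc (0 : ℝ) 1) (hpc : p < criticalSeed F) :
    ∃ L < 1, Tendsto (fun t => (seedUpdate F p)^[t] p) atTop (𝓝 L) := by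
  have hblocked : ∃ x ∈ Icc (0 : ℝ) 1, seedUpdate F p x < x := by
    by_contra! h
    exact notMem_of_lt_csInf hpc (bddBelow_unblockedSeeds F) ⟨hp, h⟩
  obtain ⟨x, hx, hlt⟩ := hblocked
  have hmaps := mapsTo_seedUpdate hF hp
  have hmono' := monotoneOn_seedUpdate hmono hp.2
  -- The barrier is `φ_p(x)` rather than `x`, since `x = 1` is possible.
  have hbarrier := hmaps hx
  have hsub : Icc p (seedUpdate F p x) ⊆ Icc 0 1 := Icc_subset_Icc hp.1 hbarrier.2
  obtain ⟨L, hL, hlim⟩ := exists_tendsto_iterate_of_monotoneOn_Icc (hmono'.mono hsub) hbarrier.1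
    (hmaps hp).1 (hmono' (hsub (right_mem_Icc.2 hbarrier.1)) hx hlt.le)
  exact ⟨L, hL.trans_lt (hlt.trans_le hx.2), hlim⟩

end SeedUpdate

/-- The upper tail `∑_{k ≥ θ} b_{n,k}` of the Bernstein basis, a polynomial whose value at
`x ∈ [0, 1]` is the probability that a binomial variable with parameters `n` and `x` is at
least `θ`. -/
noncomputable def bernsteinTail (R : Type*) [CommRing R] (n θ : ℕ) : R[X] :=
  ∑ k ∈ Finset.Icc θ n, bernsteinPolynomial R n k

section BernsteinTail

theorem eval_bernsteinTail {R : Type*} [CommRing R] (n θ : ℕ) (x : R) :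
    (bernsteinTail R n θ).eval x =
      ∑ k ∈ Finset.Icc θ n, (n.choose k : R) * x ^ k * (1 - x) ^ (n - k) := by
  simp [bernsteinTail, bernsteinPolynomial, eval_finsetSum]

theorem bernsteinTail_zero (R : Type*) [CommRing R] (n : ℕ) : bernsteinTail R n 0 = 1 := by
  rw [bernsteinTail, ← Nat.range_succ_eq_Icc_zero, bernsteinPolynomial.sum]

theorem eval_zero_bernsteinTail {R : Type*} [CommRing R] (n : ℕ) {θ : ℕ} (hθ : θ ≠ 0) :
    (bernsteinTail R n θ).eval 0 = 0 := by
  rw [bernsteinTail, eval_finsetSum]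
  refine Finset.sum_eq_zero fun k hk => ?_
  rw [bernsteinPolynomial.eval_at_0, if_neg]
  have := (Finset.mem_Icc.1 hk).1
  omega

theorem derivative_bernsteinTail_succ (R : Type*) [CommRing R] (n j : ℕ) :
    derivative (bernsteinTail R n (j + 1)) = n * bernsteinPolynomial R (n - 1) j := by
  have hlast : (n : R[X]) * bernsteinPolynomial R (n - 1) n = 0 := by
    rcases n.eq_zero_or_pos with rfl | hn
    · simp
    · rw [bernsteinPolynomial.eq_zero_of_lt R (Nat.sub_lt hn one_pos), mul_zero]
  rcases le_or_gt j n with hjn | hnj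
  · have htelescope := Finset.sum_Ico_sub (bernsteinPolynomial R (n - 1)) hjn
    calc derivative (bernsteinTail R n (j + 1))
        = ∑ k ∈ Finset.Ico j n, derivative (bernsteinPolynomial R n (k + 1)) := by
          rw [bernsteinTail, derivative_sum, ← Finset.Ico_add_one_right_eq_Icc,
            ← Finset.sum_Ico_add']
      _ = -(n * ∑ k ∈ Finset.Ico j n, (bernsteinPolynomial R (n - 1) (k + 1) -
            bernsteinPolynomial R (n - 1) k)) := by
          simp only [bernsteinPolynomial.derivative_succ, ← Finset.mul_sum, ← mul_neg,
            ← Finset.sum_neg_distrib, neg_sub]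
      _ = n * bernsteinPolynomial R (n - 1) j := by
          rw [htelescope, mul_sub, hlast, zero_sub, neg_neg]
  · rw [bernsteinTail, Finset.Icc_eq_empty (by omega), Finset.sum_empty, derivative_zero,
      bernsteinPolynomial.eq_zero_of_lt R (by omega), mul_zero]

theorem eval_bernsteinPolynomial_nonneg (n k : ℕ) {x : ℝ} (hx : x ∈ Icc (0 : ℝ) 1) :
    0 ≤ (bernsteinPolynomial ℝ n k).eval x :=
  bernstein_nonneg (x := ⟨x, hx⟩)

theorem mapsTo_eval_bernsteinTail (n θ : ℕ) :
    MapsTo (bernsteinTail ℝ n θ).eval (Icc 0 1) (Icc 0 1) := by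
  intro x hx
  simp only [bernsteinTail, eval_finsetSum]
  refine ⟨Finset.sum_nonneg fun k _ => eval_bernsteinPolynomial_nonneg n k hx, ?_⟩
  calc ∑ k ∈ Finset.Icc θ n, (bernsteinPolynomial ℝ n k).eval x
      ≤ ∑ k ∈ Finset.range (n + 1), (bernsteinPolynomial ℝ n k).eval x :=
        Finset.sum_le_sum_of_subset_of_nonneg
          (fun k hk => Finset.mem_range_succ_iff.2 (Finset.mem_Icc.1 hk).2)
          fun k _ _ => eval_bernsteinPolynomial_nonneg n k hx
    _ = 1 := by rw [← eval_finsetSum, bernsteinPolynomial.sum, eval_one]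

theorem monotoneOn_eval_bernsteinTail (n θ : ℕ) :
    MonotoneOn (bernsteinTail ℝ n θ).eval (Icc 0 1) := by
  refine monotoneOn_of_deriv_nonneg (convex_Icc 0 1) (Polynomial.continuousOn _)
    (Polynomial.differentiable _).differentiableOn fun x hx => ?_
  rw [Polynomial.deriv]
  cases θ with
  | zero => rw [bernsteinTail_zero, derivative_one, eval_zero]
  | succ j =>
    rw [derivative_bernsteinTail_succ, eval_mul, eval_natCast]
    exact mul_nonneg n.cast_nonneg (eval_bernsteinPolynomial_nonneg _ _ (interior_subset hx))

theorem pow_le_eval_bernsteinTail {n θ : ℕ} (hθ : θ ≤ n) {x : ℝ} (hx : x ∈ Icc (0 : ℝ) 1) :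
    x ^ n ≤ (bernsteinTail ℝ n θ).eval x := by
  rw [bernsteinTail, eval_finsetSum]
  calc x ^ n = (bernsteinPolynomial ℝ n n).eval x := by simp [bernsteinPolynomial]
    _ ≤ ∑ k ∈ Finset.Icc θ n, (bernsteinPolynomial ℝ n k).eval x :=
        Finset.single_le_sum (fun k _ => eval_bernsteinPolynomial_nonneg n k hx)
          (Finset.right_mem_Icc.2 hθ)

theorem one_sub_eval_bernsteinTail_le {n θ : ℕ} (hθ : θ ≤ n) {x : ℝ} (hx : x ∈ Icc (0 : ℝ) 1) :
    1 - (bernsteinTail ℝ n θ).eval x ≤ n * (1 - x) := by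
  have hbernoulli : 1 + n * (x - 1) ≤ x ^ n :=
    one_add_mul_sub_le_pow (neg_one_lt_zero.le.trans hx.1) n
  linarith [pow_le_eval_bernsteinTail hθ hx]

theorem exists_eval_bernsteinTail_lt_self (n : ℕ) {θ : ℕ} (hθ : 2 ≤ θ) :
    ∃ x ∈ Icc (0 : ℝ) 1, (bernsteinTail ℝ n θ).eval x < x := by
  obtain ⟨j, rfl⟩ := Nat.exists_eq_add_of_le' hθ
  have hderiv : HasDerivAt (bernsteinTail ℝ n (j + 2)).eval 0 0 := by
    simpa [derivative_bernsteinTail_succ, bernsteinPolynomial.eval_at_0] using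
      (bernsteinTail ℝ n (j + 2)).hasDerivAt 0
  have hbelow := eventually_lt_self_of_hasDerivWithinAt hderiv.hasDerivWithinAt one_pos
    (eval_zero_bernsteinTail n (by omega)).le
  obtain ⟨x, hlt, hx⟩ := (hbelow.and (Ioo_mem_nhdsGT one_pos)).exists
  exact ⟨x, Ioo_subset_Icc_self hx, hlt⟩

end BernsteinTail

theorem phiBP_eq_seedUpdate (n θ : ℕ) (p : ℝ) :
    phiBP n θ p = seedUpdate (bernsteinTail ℝ n θ).eval p := by
  funext x
  rw [phiBP, seedUpdate, eval_bernsteinTail]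

theorem sBP_eq_iterate (n θ : ℕ) (p : ℝ) :
    sBP n θ p = fun t => (seedUpdate (bernsteinTail ℝ n θ).eval p)^[t] p := by
  funext t
  induction t with
  | zero => rfl
  | succ t ih => rw [sBP, ih, phiBP_eq_seedUpdate, Function.iterate_succ_apply']

theorem stmt_17_general (n θ : ℕ) (hθ : 2 ≤ θ) (hθn : θ ≤ n) :
    ∃ pc : ℝ, 0 < pc ∧ pc < 1 ∧
      (∀ p : ℝ, pc < p → p ≤ 1 → Tendsto (sBP n θ p) atTop (𝓝 1)) ∧
      (∀ p : ℝ, 0 ≤ p → p < pc → ∃ L : ℝ, L < 1 ∧ Tendsto (sBP n θ p) atTop (𝓝 L)) := by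
  have hmaps := mapsTo_eval_bernsteinTail n θ
  have hn : (1 : ℝ) ≤ n := Nat.one_le_cast.2 (one_le_two.trans (hθ.trans hθn))
  have hchord : ∀ x ∈ Icc (0 : ℝ) 1, 1 - (bernsteinTail ℝ n θ).eval x ≤ n * (1 - x) :=
    fun _ => one_sub_eval_bernsteinTail_le hθn
  have hne : (unblockedSeeds (bernsteinTail ℝ n θ).eval).Nonempty :=
    ⟨_, one_sub_inv_mem_unblockedSeeds hn hchord⟩
  have hpc := criticalSeed_lt_one hn hchord
  obtain ⟨x, hx, hlt⟩ := exists_eval_bernsteinTail_lt_self n hθ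
  simp only [sBP_eq_iterate]
  exact ⟨criticalSeed (bernsteinTail ℝ n θ).eval, criticalSeed_pos hne hx hlt, hpc,
    fun _ hp hp₁ => tendsto_iterate_seedUpdate_of_criticalSeed_lt hmaps hne hp hp₁,
    fun _ hp₀ hp => exists_tendsto_iterate_seedUpdate_of_lt_criticalSeed hmaps
      (monotoneOn_eval_bernsteinTail n θ) ⟨hp₀, (hp.trans hpc).le⟩ hp⟩

theorem stmt_17 (n θ : ℕ) (hθ : 2 ≤ θ) (hθn : θ < n) :
    ∃ pc : ℝ, 0 < pc ∧ pc < 1 ∧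
      (∀ p : ℝ, pc < p → p ≤ 1 →
        Filter.Tendsto (sBP n θ p) Filter.atTop (nhds 1)) ∧
      (∀ p : ℝ, 0 ≤ p → p < pc →
        ∃ L : ℝ, L < 1 ∧ Filter.Tendsto (sBP n θ p) Filter.atTop (nhds L)) :=
  stmt_17_general n θ hθ hθn.le
end

section
/- Let a, b, θ be integers with 2 ≤ θ ≤ min(a,b)−1. For p ∈ [0,1] define x_0(p) = y_0(p) = p and, for t ≥ 1, x_t(p) = φ_{a,p,θ}(y_{t−1}(p)) and y_t(p) = φ_{b,p,θ}(x_{t−1}(p)), with limits x_∞(p) and y_∞(p). Then there exists p_f ∈ (0,1) such that for every p with p_f < p ≤ 1 one has x_∞(p) = 1 and y_∞(p) = 1, and for every p with 0 ≤ p < p_f one has x_∞(p) < 1 and y_∞(p) < 1. Moreover, if a ≤ b and p_a, p_b ∈ (0,1) denote the critical values of the one-dimensional iterations s_t = φ_{a,p,θ}(s_{t−1}) and S_t = φ_{b,p,θ}(S_{t−1}) with s_0 = S_0 = p (i.e., the limit of the iteration equals 1 for p above the critical value and is < 1 below it), then p_b ≤ p_f ≤ p_a. -/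
/-- `pc` is a critical value for the one-dimensional iteration `s_t` on the tree with
in-degree `n`: above `pc` the limit of the iteration is `1`, below `pc` it is `< 1`. -/
def IsCritBP (n θ : ℕ) (pc : ℝ) : Prop :=
  (∀ p : ℝ, pc < p → p ≤ 1 → Filter.Tendsto (sBP n θ p) Filter.atTop (nhds 1)) ∧
  (∀ p : ℝ, 0 ≤ p → p < pc → ∃ L : ℝ, L < 1 ∧ Filter.Tendsto (sBP n θ p) Filter.atTop (nhds L))

/-!
Write `F (x, y) = (φ_a(y), φ_b(x))`, so that `(x_t, y_t)` is the `F`-orbit of `(p, p)` in the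
ordered square `[0, 1]²`, and let `P` be the set of `p` for which it converges to `(1, 1)`. Since
`F` is increasing in the point and in `a`, `b` and `p`, the set `P` is an upper set of `[0, 1]`
that grows with `a` and `b`; `p_f` is its infimum.

* `p_f < 1`: by Bernoulli's inequality `1 - φ_n(x) ≤ n (1 - p) (1 - x)`, so for `p` near `1` the
  map `F ∘ F` contracts towards `(1, 1)` and no other fixed point survives.
* `0 < p_f`: by the union bound `φ_n(x) ≤ p + C(n, θ) x^θ`. As `θ ≥ 2`, the square `[0, c]²` is
  invariant for small `c` and `p ≤ c / 2`.

The one-dimensional iteration with parameter `n` is the diagonal case `a = b = n`, so `p_n` is `p_f`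
for that case and `p_b ≤ p_f ≤ p_a` is monotonicity in the degrees.
-/

section BinomialTail

open Set

theorem bernsteinPolynomial_succ_succ (R : Type*) [CommRing R] (n k : ℕ) :
    bernsteinPolynomial R (n + 1) (k + 1) =
      Polynomial.X * bernsteinPolynomial R n k +
        (1 - Polynomial.X) * bernsteinPolynomial R n (k + 1) := by
  rcases lt_or_ge k n with hk | hk
  · obtain ⟨m, rfl⟩ := Nat.exists_eq_add_of_lt hk
    have hsub : k + m + 1 - k = m + 1 := by omega
    have hsub' : k + m + 1 - (k + 1) = m := by omega
    simp only [bernsteinPolynomial, Nat.choose_succ_succ', Nat.add_sub_add_right, hsub, hsub']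
    push_cast
    ring
  · rw [bernsteinPolynomial.eq_zero_of_lt R (Nat.lt_succ_of_le hk)]
    simp only [bernsteinPolynomial, Nat.choose_succ_succ', Nat.add_sub_add_right,
      Nat.choose_eq_zero_of_lt (Nat.lt_succ_of_le hk)]
    push_cast
    ring

/-- The upper tail `P(S ≥ k)` of a binomial variable `S` with `n` trials of success probability
`x`, a sum of Bernstein polynomials. -/
noncomputable def binomialTail (n k : ℕ) (x : ℝ) : ℝ :=
  ∑ j ∈ Finset.Icc k n, (bernsteinPolynomial ℝ n j).eval x

variable {n k : ℕ} {x : ℝ}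

theorem bernsteinPolynomial_eval_nonneg (hx : x ∈ Icc (0 : ℝ) 1) :
    0 ≤ (bernsteinPolynomial ℝ n k).eval x :=
  bernstein_nonneg (x := ⟨x, hx⟩)

theorem binomialTail_zero_right (n : ℕ) (x : ℝ) : binomialTail n 0 x = 1 := by
  rw [binomialTail, ← Polynomial.eval_finsetSum, ← Nat.range_succ_eq_Icc_zero,
    bernsteinPolynomial.sum, Polynomial.eval_one]

theorem binomialTail_self (n : ℕ) (x : ℝ) : binomialTail n n x = x ^ n := by
  simp [binomialTail, bernsteinPolynomial]

theorem binomialTail_zero_succ (k : ℕ) (x : ℝ) : binomialTail 0 (k + 1) x = 0 := by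
  simp [binomialTail]

-- Condition on the outcome of one trial.
theorem binomialTail_succ_succ (n k : ℕ) (x : ℝ) :
    binomialTail (n + 1) (k + 1) x =
      x * binomialTail n k x + (1 - x) * binomialTail n (k + 1) x := by
  have hshift (f : ℕ → ℝ) :
      ∑ j ∈ Finset.Icc (k + 1) (n + 1), f j = ∑ j ∈ Finset.Icc k n, f (j + 1) := by
    rw [← Finset.map_add_right_Icc, Finset.sum_map]; rfl
  have htop : binomialTail n (k + 1) x =
      ∑ j ∈ Finset.Icc k n, (bernsteinPolynomial ℝ n (j + 1)).eval x := by
    rw [← hshift fun j ↦ (bernsteinPolynomial ℝ n j).eval x]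
    refine Finset.sum_subset (Finset.Icc_subset_Icc_right n.le_succ) fun j hj hj' ↦ ?_
    have hnj : n < j := by
      simp only [Finset.mem_Icc] at hj hj'
      omega
    rw [bernsteinPolynomial.eq_zero_of_lt ℝ hnj, Polynomial.eval_zero]
  rw [htop, binomialTail, binomialTail, hshift, Finset.mul_sum, Finset.mul_sum,
    ← Finset.sum_add_distrib]
  simp [bernsteinPolynomial_succ_succ]

theorem binomialTail_nonneg (hx : x ∈ Icc (0 : ℝ) 1) : 0 ≤ binomialTail n k x :=
  Finset.sum_nonneg fun _ _ ↦ bernsteinPolynomial_eval_nonneg hx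

theorem binomialTail_antitone_right (n : ℕ) (hx : x ∈ Icc (0 : ℝ) 1) :
    Antitone fun k ↦ binomialTail n k x := fun _ _ hkl ↦
  Finset.sum_le_sum_of_subset_of_nonneg (Finset.Icc_subset_Icc_left hkl)
    fun _ _ _ ↦ bernsteinPolynomial_eval_nonneg hx

theorem binomialTail_le_one (hx : x ∈ Icc (0 : ℝ) 1) : binomialTail n k x ≤ 1 :=
  (binomialTail_antitone_right n hx k.zero_le).trans_eq (binomialTail_zero_right n x)

theorem binomialTail_monotone_left (k : ℕ) (hx : x ∈ Icc (0 : ℝ) 1) :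
    Monotone fun n ↦ binomialTail n k x := by
  refine monotone_nat_of_le_succ fun n ↦ ?_
  cases k with
  | zero => simp only [binomialTail_zero_right, le_refl]
  | succ k =>
    rw [binomialTail_succ_succ]
    linarith [mul_le_mul_of_nonneg_left (binomialTail_antitone_right n hx k.le_succ) hx.1]

theorem binomialTail_monotoneOn (n k : ℕ) : MonotoneOn (binomialTail n k) (Icc 0 1) := by
  intro x hx y hy hxy
  induction n generalizing k with
  | zero => cases k <;> simp only [binomialTail_zero_right, binomialTail_zero_succ, le_refl]
  | succ n ih =>
    cases k with
    | zero => simp only [binomialTail_zero_right, le_refl]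
    | succ k =>
      rw [binomialTail_succ_succ, binomialTail_succ_succ]
      calc x * binomialTail n k x + (1 - x) * binomialTail n (k + 1) x
          ≤ x * binomialTail n k y + (1 - x) * binomialTail n (k + 1) y :=
            add_le_add (mul_le_mul_of_nonneg_left (ih k) hx.1)
              (mul_le_mul_of_nonneg_left (ih (k + 1)) (sub_nonneg.2 hx.2))
        _ ≤ y * binomialTail n k y + (1 - y) * binomialTail n (k + 1) y := by
            linarith [mul_le_mul_of_nonneg_right hxy
              (sub_nonneg.2 (binomialTail_antitone_right n hy k.le_succ))]

-- Union bound over the `k`-subsets of the trials.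
theorem binomialTail_le_choose_mul_pow (n k : ℕ) (hx : x ∈ Icc (0 : ℝ) 1) :
    binomialTail n k x ≤ n.choose k * x ^ k := by
  induction n generalizing k with
  | zero => cases k <;> simp [binomialTail_zero_right, binomialTail_zero_succ]
  | succ n ih =>
    cases k with
    | zero => simp [binomialTail_zero_right]
    | succ k =>
      have hx0 := hx.1
      calc binomialTail (n + 1) (k + 1) x
          = x * binomialTail n k x + (1 - x) * binomialTail n (k + 1) x :=
            binomialTail_succ_succ n k x
        _ ≤ x * (n.choose k * x ^ k) + 1 * (n.choose (k + 1) * x ^ (k + 1)) := by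
            gcongr
            · exact ih k
            · exact binomialTail_nonneg hx
            · linarith
            · exact ih (k + 1)
        _ = (n + 1).choose (k + 1) * x ^ (k + 1) := by
            rw [Nat.choose_succ_succ']
            push_cast
            ring

theorem one_sub_binomialTail_le (hk : k ≤ n) (hx : x ∈ Icc (0 : ℝ) 1) :
    1 - binomialTail n k x ≤ n * (1 - x) := by
  have htail : x ^ n ≤ binomialTail n k x :=
    (binomialTail_self n x).ge.trans (binomialTail_antitone_right n hx hk)
  have hbernoulli : 1 + n * (x - 1) ≤ (1 + (x - 1)) ^ n :=
    one_add_mul_le_pow (by linarith [hx.1]) n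
  rw [add_sub_cancel] at hbernoulli
  linarith

end BinomialTail

section PhiBP

open Set

variable {n θ : ℕ} {p x : ℝ}

theorem phiBP_eq_add_mul_binomialTail (n θ : ℕ) (p x : ℝ) :
    phiBP n θ p x = p + (1 - p) * binomialTail n θ x := by
  simp [phiBP, binomialTail, bernsteinPolynomial]

theorem continuous_phiBP (n θ : ℕ) (p : ℝ) : Continuous (phiBP n θ p) := by
  unfold phiBP
  fun_prop

theorem phiBP_mem_Icc (hp : p ≤ 1) (hx : x ∈ Icc (0 : ℝ) 1) : phiBP n θ p x ∈ Icc p 1 := by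
  rw [phiBP_eq_add_mul_binomialTail]
  have hq := sub_nonneg.2 hp
  constructor
  · linarith [mul_nonneg hq (binomialTail_nonneg (n := n) (k := θ) hx)]
  · linarith [mul_le_of_le_one_right hq (binomialTail_le_one (n := n) (k := θ) hx)]

theorem phiBP_le_phiBP {n' : ℕ} {p' x' : ℝ} (hn : n ≤ n') (hp : p ≤ p') (hp' : p' ≤ 1)
    (hx : x ∈ Icc (0 : ℝ) 1) (hx' : x' ∈ Icc (0 : ℝ) 1) (hxx' : x ≤ x') :
    phiBP n θ p x ≤ phiBP n' θ p' x' := by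
  have htail : binomialTail n θ x ≤ binomialTail n' θ x' :=
    (binomialTail_monotoneOn n θ hx hx' hxx').trans (binomialTail_monotone_left θ hx' hn)
  rw [phiBP_eq_add_mul_binomialTail, phiBP_eq_add_mul_binomialTail]
  calc p + (1 - p) * binomialTail n θ x
      ≤ p + (1 - p) * binomialTail n' θ x' := by gcongr; linarith
    _ = binomialTail n' θ x' + p * (1 - binomialTail n' θ x') := by ring
    _ ≤ binomialTail n' θ x' + p' * (1 - binomialTail n' θ x') := by
        gcongr; linarith [binomialTail_le_one (n := n') (k := θ) hx']
    _ = p' + (1 - p') * binomialTail n' θ x' := by ring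

theorem phiBP_le_add_choose_mul_pow (hp : 0 ≤ p) (hx : x ∈ Icc (0 : ℝ) 1) :
    phiBP n θ p x ≤ p + n.choose θ * x ^ θ := by
  rw [phiBP_eq_add_mul_binomialTail]
  linarith [mul_nonneg hp (binomialTail_nonneg (n := n) (k := θ) hx),
    binomialTail_le_choose_mul_pow n θ hx]

theorem one_sub_phiBP_le (hθ : θ ≤ n) (hp : p ≤ 1) (hx : x ∈ Icc (0 : ℝ) 1) :
    1 - phiBP n θ p x ≤ (1 - p) * (n * (1 - x)) := by
  rw [phiBP_eq_add_mul_binomialTail]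
  linarith [mul_le_mul_of_nonneg_left (one_sub_binomialTail_le hθ hx) (sub_nonneg.2 hp)]

theorem phiBP_one_right (hθ : θ ≤ n) (hp : p ≤ 1) : phiBP n θ p 1 = 1 := by
  have h1 : (1 : ℝ) ∈ Icc (0 : ℝ) 1 := right_mem_Icc.2 zero_le_one
  refine le_antisymm (phiBP_mem_Icc hp h1).2 ?_
  linarith [one_sub_phiBP_le hθ hp h1]

end PhiBP

section Iteration

open Set Filter Topology Function

/-- The map `(x, y) ↦ (φ_{a,p,θ}(y), φ_{b,p,θ}(x))` whose iteration from `(p, p)` is `xyBP`. -/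
noncomputable def stepBP (a b θ : ℕ) (p : ℝ) (z : ℝ × ℝ) : ℝ × ℝ :=
  (phiBP a θ p z.2, phiBP b θ p z.1)

variable {a b θ : ℕ} {p : ℝ} {z : ℝ × ℝ}

theorem continuous_stepBP (a b θ : ℕ) (p : ℝ) : Continuous (stepBP a b θ p) :=
  ((continuous_phiBP a θ p).comp continuous_snd).prodMk
    ((continuous_phiBP b θ p).comp continuous_fst)

theorem stepBP_mem_Icc (hp : p ≤ 1) (hz : z ∈ Icc (0 : ℝ × ℝ) 1) :
    stepBP a b θ p z ∈ Icc (p, p) 1 :=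
  have hx := phiBP_mem_Icc (n := a) (θ := θ) hp ⟨hz.1.2, hz.2.2⟩
  have hy := phiBP_mem_Icc (n := b) (θ := θ) hp ⟨hz.1.1, hz.2.1⟩
  ⟨⟨hx.1, hy.1⟩, ⟨hx.2, hy.2⟩⟩

theorem stepBP_le_stepBP {a' b' : ℕ} {p' : ℝ} {z' : ℝ × ℝ} (ha : a ≤ a') (hb : b ≤ b')
    (hp : p ≤ p') (hp' : p' ≤ 1) (hz : z ∈ Icc (0 : ℝ × ℝ) 1) (hz' : z' ∈ Icc (0 : ℝ × ℝ) 1)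
    (hzz' : z ≤ z') : stepBP a b θ p z ≤ stepBP a' b' θ p' z' :=
  ⟨phiBP_le_phiBP ha hp hp' ⟨hz.1.2, hz.2.2⟩ ⟨hz'.1.2, hz'.2.2⟩ hzz'.2,
    phiBP_le_phiBP hb hp hp' ⟨hz.1.1, hz.2.1⟩ ⟨hz'.1.1, hz'.2.1⟩ hzz'.1⟩

theorem xyBP_succ (a b θ : ℕ) (p : ℝ) (t : ℕ) :
    xyBP a b θ p (t + 1) = stepBP a b θ p (xyBP a b θ p t) := rfl

theorem xyBP_eq_iterate (a b θ : ℕ) (p : ℝ) (t : ℕ) :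
    xyBP a b θ p t = (stepBP a b θ p)^[t] (p, p) := by
  induction t with
  | zero => rfl
  | succ t ih => rw [iterate_succ_apply', ← ih, xyBP_succ]

theorem xyBP_self (n θ : ℕ) (p : ℝ) (t : ℕ) :
    xyBP n n θ p t = (sBP n θ p t, sBP n θ p t) := by
  induction t with
  | zero => rfl
  | succ t ih => simp only [xyBP, sBP, ih]

theorem xyBP_one (a b θ t : ℕ) : xyBP a b θ 1 t = 1 := by
  cases t <;> simp [xyBP, phiBP]

theorem xyBP_mem_Icc (hp : p ∈ Icc (0 : ℝ) 1) (t : ℕ) :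
    xyBP a b θ p t ∈ Icc (0 : ℝ × ℝ) 1 := by
  induction t with
  | zero => exact ⟨⟨hp.1, hp.1⟩, ⟨hp.2, hp.2⟩⟩
  | succ t ih => exact Icc_subset_Icc_left (Prod.mk_le_mk.2 ⟨hp.1, hp.1⟩) (stepBP_mem_Icc hp.2 ih)

theorem xyBP_le_xyBP {a' b' : ℕ} {p' : ℝ} (ha : a ≤ a') (hb : b ≤ b') (hp : 0 ≤ p)
    (hpp' : p ≤ p') (hp' : p' ≤ 1) (t : ℕ) : xyBP a b θ p t ≤ xyBP a' b' θ p' t := by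
  induction t with
  | zero => exact ⟨hpp', hpp'⟩
  | succ t ih =>
    exact stepBP_le_stepBP ha hb hpp' hp' (xyBP_mem_Icc ⟨hp, hpp'.trans hp'⟩ t)
      (xyBP_mem_Icc ⟨hp.trans hpp', hp'⟩ t) ih

theorem monotone_xyBP (hp : p ∈ Icc (0 : ℝ) 1) : Monotone (xyBP a b θ p) := by
  refine monotone_nat_of_le_succ fun t ↦ ?_
  induction t with
  | zero => exact (stepBP_mem_Icc hp.2 (xyBP_mem_Icc hp 0)).1
  | succ t ih =>
    exact stepBP_le_stepBP le_rfl le_rfl le_rfl hp.2 (xyBP_mem_Icc hp t)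
      (xyBP_mem_Icc hp (t + 1)) ih

theorem xyBP_le_of_stepBP_le (hp : p ∈ Icc (0 : ℝ) 1) (hpz : (p, p) ≤ z) (hz : z ≤ 1)
    (hstep : stepBP a b θ p z ≤ z) (t : ℕ) : xyBP a b θ p t ≤ z := by
  have hz0 : 0 ≤ z := (xyBP_mem_Icc (a := a) (b := b) (θ := θ) hp 0).1.trans hpz
  induction t with
  | zero => exact hpz
  | succ t ih =>
    exact (stepBP_le_stepBP le_rfl le_rfl le_rfl hp.2 (xyBP_mem_Icc hp t) ⟨hz0, hz⟩ ih).trans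
      hstep

theorem exists_isFixedPt_tendsto_xyBP (a b θ : ℕ) (hp : p ∈ Icc (0 : ℝ) 1) :
    ∃ z ∈ Icc (0 : ℝ × ℝ) 1, IsFixedPt (stepBP a b θ p) z ∧
      Tendsto (xyBP a b θ p) atTop (𝓝 z) := by
  have hmem := xyBP_mem_Icc (a := a) (b := b) (θ := θ) hp
  have hmono := monotone_xyBP (a := a) (b := b) (θ := θ) hp
  have hx := tendsto_atTop_ciSup (monotone_fst.comp hmono)
    ⟨1, forall_mem_range.2 fun t ↦ (hmem t).2.1⟩
  have hy := tendsto_atTop_ciSup (monotone_snd.comp hmono)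
    ⟨1, forall_mem_range.2 fun t ↦ (hmem t).2.2⟩
  have hlim := hx.prodMk_nhds hy
  refine ⟨_, isClosed_Icc.mem_of_tendsto hlim (.of_forall hmem), ?_, hlim⟩
  exact isFixedPt_of_tendsto_iterate (hlim.congr (xyBP_eq_iterate a b θ p))
    (continuous_stepBP a b θ p).continuousAt

theorem fst_eq_one_iff_of_isFixedPt_stepBP (hθa : θ ≤ a) (hθb : θ ≤ b) (hp : p ≤ 1)
    (hfix : IsFixedPt (stepBP a b θ p) z) : z.1 = 1 ↔ z.2 = 1 := by
  have hfst : phiBP a θ p z.2 = z.1 := congrArg Prod.fst hfix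
  have hsnd : phiBP b θ p z.1 = z.2 := congrArg Prod.snd hfix
  constructor <;> intro h
  · rw [← hsnd, h, phiBP_one_right hθb hp]
  · rw [← hfst, h, phiBP_one_right hθa hp]

theorem eq_one_of_isFixedPt_stepBP (hθa : θ ≤ a) (hθb : θ ≤ b) (hp : p ≤ 1)
    (hcontr : a * b * (1 - p) ^ 2 < 1) (hz : z ∈ Icc (0 : ℝ × ℝ) 1)
    (hfix : IsFixedPt (stepBP a b θ p) z) : z = 1 := by
  have hfst : 1 - z.1 ≤ (1 - p) * (a * (1 - z.2)) := by
    rw [← show phiBP a θ p z.2 = z.1 from congrArg Prod.fst hfix]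
    exact one_sub_phiBP_le hθa hp ⟨hz.1.2, hz.2.2⟩
  have hsnd : 1 - z.2 ≤ (1 - p) * (b * (1 - z.1)) := by
    rw [← show phiBP b θ p z.1 = z.2 from congrArg Prod.snd hfix]
    exact one_sub_phiBP_le hθb hp ⟨hz.1.1, hz.2.1⟩
  have hself : 1 - z.1 ≤ a * b * (1 - p) ^ 2 * (1 - z.1) := by
    have : 0 ≤ 1 - p := sub_nonneg.2 hp
    calc 1 - z.1 ≤ (1 - p) * (a * (1 - z.2)) := hfst
      _ ≤ (1 - p) * (a * ((1 - p) * (b * (1 - z.1)))) := by gcongr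
      _ = a * b * (1 - p) ^ 2 * (1 - z.1) := by ring
  have hz1 : z.1 = 1 := le_antisymm hz.2.1 (by nlinarith)
  exact Prod.ext hz1 ((fst_eq_one_iff_of_isFixedPt_stepBP hθa hθb hp hfix).1 hz1)

end Iteration

section CriticalProbability

open Set Filter Topology

/-- The set of activation probabilities `p ∈ [0, 1]` for which both coordinates of the coupled
iteration tend to `1`. -/
def percolationSet (a b θ : ℕ) : Set ℝ :=
  {p ∈ Icc (0 : ℝ) 1 | Tendsto (xyBP a b θ p) atTop (𝓝 1)}

/-- The bootstrap percolation threshold `p_f` of the paper. -/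
noncomputable def criticalProb (a b θ : ℕ) : ℝ := sInf (percolationSet a b θ)

variable {a b θ : ℕ} {p : ℝ}

theorem one_mem_percolationSet (a b θ : ℕ) : 1 ∈ percolationSet a b θ :=
  ⟨right_mem_Icc.2 zero_le_one,
    tendsto_const_nhds.congr fun t ↦ (xyBP_one a b θ t).symm⟩

theorem bddBelow_percolationSet (a b θ : ℕ) : BddBelow (percolationSet a b θ) :=
  ⟨0, fun _ hp ↦ hp.1.1⟩

theorem criticalProb_le_of_mem (hp : p ∈ percolationSet a b θ) : criticalProb a b θ ≤ p :=
  csInf_le (bddBelow_percolationSet a b θ) hp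

theorem mem_percolationSet_of_le {a' b' : ℕ} {p' : ℝ} (hp : p ∈ percolationSet a b θ)
    (ha : a ≤ a') (hb : b ≤ b') (hpp' : p ≤ p') (hp' : p' ≤ 1) :
    p' ∈ percolationSet a' b' θ := by
  obtain ⟨⟨hp0, -⟩, hlim⟩ := hp
  have hp'mem : p' ∈ Icc (0 : ℝ) 1 := ⟨hp0.trans hpp', hp'⟩
  have hle := xyBP_le_xyBP (θ := θ) ha hb hp0 hpp' hp'
  have hle_one (t : ℕ) : xyBP a' b' θ p' t ≤ 1 := (xyBP_mem_Icc hp'mem t).2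
  rw [Prod.tendsto_iff] at hlim
  exact ⟨hp'mem, (Prod.tendsto_iff _ _).2
    ⟨tendsto_of_tendsto_of_tendsto_of_le_of_le hlim.1 tendsto_const_nhds
      (fun t ↦ (hle t).1) fun t ↦ (hle_one t).1,
    tendsto_of_tendsto_of_tendsto_of_le_of_le hlim.2 tendsto_const_nhds
      (fun t ↦ (hle t).2) fun t ↦ (hle_one t).2⟩⟩

theorem mem_percolationSet_of_criticalProb_lt (hp : criticalProb a b θ < p) (hp1 : p ≤ 1) :
    p ∈ percolationSet a b θ :=
  have ⟨_, hr, hrp⟩ := exists_lt_of_csInf_lt ⟨1, one_mem_percolationSet a b θ⟩ hp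
  mem_percolationSet_of_le hr le_rfl le_rfl hrp.le hp1

theorem criticalProb_le_criticalProb {a' b' : ℕ} (ha : a ≤ a') (hb : b ≤ b') :
    criticalProb a' b' θ ≤ criticalProb a b θ :=
  csInf_le_csInf (bddBelow_percolationSet a' b' θ) ⟨1, one_mem_percolationSet a b θ⟩
    fun _ hp ↦ mem_percolationSet_of_le hp ha hb le_rfl hp.1.2

theorem exists_lt_one_tendsto_xyBP_of_lt_criticalProb (hθa : θ ≤ a) (hθb : θ ≤ b) (hp0 : 0 ≤ p)
    (hp : p < criticalProb a b θ) :
    ∃ z : ℝ × ℝ, z.1 < 1 ∧ z.2 < 1 ∧ Tendsto (xyBP a b θ p) atTop (𝓝 z) := by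
  have hp1 : p ≤ 1 := hp.le.trans (criticalProb_le_of_mem (one_mem_percolationSet a b θ))
  obtain ⟨z, hz, hfix, hlim⟩ := exists_isFixedPt_tendsto_xyBP a b θ ⟨hp0, hp1⟩
  have hiff := fst_eq_one_iff_of_isFixedPt_stepBP hθa hθb hp1 hfix
  have hfst : z.1 ≠ 1 := fun h ↦ by
    rw [show z = 1 from Prod.ext h (hiff.1 h)] at hlim
    exact hp.not_ge (criticalProb_le_of_mem ⟨⟨hp0, hp1⟩, hlim⟩)
  exact ⟨z, hz.2.1.lt_of_ne hfst, hz.2.2.lt_of_ne (mt hiff.2 hfst), hlim⟩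

theorem criticalProb_lt_one (hθa : θ ≤ a) (hθb : θ ≤ b) : criticalProb a b θ < 1 := by
  obtain ⟨q, hq0, hq1, hcontr⟩ : ∃ q : ℝ, 0 < q ∧ q ≤ 1 ∧ a * b * q ^ 2 < 1 := by
    have hab : (0 : ℝ) ≤ a * b := by positivity
    refine ⟨1 / (a * b + 1), by positivity, by rw [div_le_one (by positivity)]; linarith, ?_⟩
    rw [div_pow, one_pow, mul_one_div, div_lt_one (by positivity)]
    nlinarith
  have hp : 1 - q ∈ Icc (0 : ℝ) 1 := ⟨by linarith, by linarith⟩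
  obtain ⟨z, hz, hfix, hlim⟩ := exists_isFixedPt_tendsto_xyBP a b θ hp
  rw [eq_one_of_isFixedPt_stepBP hθa hθb hp.2 (by rwa [sub_sub_cancel]) hz hfix] at hlim
  exact (criticalProb_le_of_mem ⟨hp, hlim⟩).trans_lt (by linarith)

theorem exists_mem_Ioo_mul_pow_le_half {M : ℝ} (hM : 0 ≤ M) {k : ℕ} (hk : 2 ≤ k) :
    ∃ c ∈ Ioo (0 : ℝ) 1, M * c ^ k ≤ c / 2 := by
  set c : ℝ := 1 / (2 * (M + 1)) with hc
  have hc0 : 0 < c := by positivity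
  have hc1 : c < 1 := by rw [hc, div_lt_one (by positivity)]; linarith
  have hMc : (M + 1) * c = 1 / 2 := by rw [hc]; field_simp
  refine ⟨c, ⟨hc0, hc1⟩, ?_⟩
  calc M * c ^ k ≤ (M + 1) * c ^ 2 := by
        gcongr ?_ * ?_
        · linarith
        · exact pow_le_pow_of_le_one hc0.le hc1.le hk
    _ = c / 2 := by linear_combination c * hMc

theorem notMem_percolationSet_of_stepBP_le {c : ℝ} (hpc : p ≤ c) (hc : c < 1)
    (hstep : stepBP a b θ p (c, c) ≤ (c, c)) : p ∉ percolationSet a b θ := fun ⟨hp, hlim⟩ ↦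
  have hle := xyBP_le_of_stepBP_le hp ⟨hpc, hpc⟩ ⟨hc.le, hc.le⟩ hstep
  hc.not_ge (le_of_tendsto' hlim hle).1

theorem criticalProb_pos (a b : ℕ) (hθ : 2 ≤ θ) : 0 < criticalProb a b θ := by
  obtain ⟨M, haM, hbM⟩ : ∃ M : ℝ, a.choose θ ≤ M ∧ b.choose θ ≤ M :=
    ⟨_, le_max_left _ _, le_max_right _ _⟩
  obtain ⟨c, ⟨hc0, hc1⟩, hc⟩ :=
    exists_mem_Ioo_mul_pow_le_half ((Nat.cast_nonneg _).trans haM) hθ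
  refine (half_pos hc0).trans_le (le_csInf ⟨1, one_mem_percolationSet a b θ⟩ fun p hp ↦ ?_)
  by_contra! hpc
  have hphi {n : ℕ} (hn : n.choose θ ≤ M) : phiBP n θ p c ≤ c :=
    calc phiBP n θ p c ≤ p + n.choose θ * c ^ θ :=
          phiBP_le_add_choose_mul_pow hp.1.1 ⟨hc0.le, hc1.le⟩
      _ ≤ c / 2 + M * c ^ θ := by gcongr
      _ ≤ c := by linarith
  exact notMem_percolationSet_of_stepBP_le (by linarith) hc1
    ⟨hphi haM, hphi hbM⟩ hp

theorem IsCritBP.eq_criticalProb {n : ℕ} {pc : ℝ} (hpc : IsCritBP n θ pc) (hθ : 2 ≤ θ) :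
    pc = criticalProb n n θ := by
  have hdiag : xyBP n n θ = fun p t ↦ (sBP n θ p t, sBP n θ p t) :=
    funext₂ (xyBP_self n θ)
  apply le_antisymm
  · refine le_csInf ⟨1, one_mem_percolationSet n n θ⟩ fun p ⟨hp, hlim⟩ ↦ ?_
    by_contra! hlt
    obtain ⟨L, hL, hlimL⟩ := hpc.2 p hp.1 hlt
    rw [hdiag, Prod.tendsto_iff] at hlim
    exact hL.ne (tendsto_nhds_unique hlimL hlim.1)
  · by_contra! hlt
    obtain ⟨p, hp, hpcrit⟩ := exists_between (max_lt (criticalProb_pos n n hθ) hlt)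
    obtain ⟨hp0, hpcp⟩ := max_lt_iff.1 hp
    have hp1 : p ≤ 1 := hpcrit.le.trans (criticalProb_le_of_mem (one_mem_percolationSet n n θ))
    have hlim := hpc.1 p hpcp hp1
    refine hpcrit.not_ge (criticalProb_le_of_mem ⟨⟨hp0.le, hp1⟩, ?_⟩)
    rw [hdiag]
    exact hlim.prodMk_nhds hlim

end CriticalProbability

theorem stmt_19_general (a b θ : ℕ) (hθ : 2 ≤ θ) (hθa : θ ≤ a) (hθb : θ ≤ b) :
    ∃ pf : ℝ, 0 < pf ∧ pf < 1 ∧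
      (∀ p : ℝ, pf < p → p ≤ 1 →
        Filter.Tendsto (xBP a b θ p) Filter.atTop (nhds 1) ∧
        Filter.Tendsto (yBP a b θ p) Filter.atTop (nhds 1)) ∧
      (∀ p : ℝ, 0 ≤ p → p < pf →
        (∃ xL : ℝ, xL < 1 ∧ Filter.Tendsto (xBP a b θ p) Filter.atTop (nhds xL)) ∧
        (∃ yL : ℝ, yL < 1 ∧ Filter.Tendsto (yBP a b θ p) Filter.atTop (nhds yL))) ∧
      (a ≤ b → ∀ pa pb : ℝ, IsCritBP a θ pa → IsCritBP b θ pb → pb ≤ pf ∧ pf ≤ pa) := by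
  refine ⟨criticalProb a b θ, criticalProb_pos a b hθ, criticalProb_lt_one hθa hθb, ?_, ?_, ?_⟩
  · exact fun p hp hp1 ↦
      (Prod.tendsto_iff _ _).1 (mem_percolationSet_of_criticalProb_lt hp hp1).2
  · intro p hp0 hp
    obtain ⟨z, hx, hy, hlim⟩ := exists_lt_one_tendsto_xyBP_of_lt_criticalProb hθa hθb hp0 hp
    rw [Prod.tendsto_iff] at hlim
    exact ⟨⟨z.1, hx, hlim.1⟩, ⟨z.2, hy, hlim.2⟩⟩
  · intro hab pa pb hpa hpb
    rw [hpa.eq_criticalProb hθ, hpb.eq_criticalProb hθ]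
    exact ⟨criticalProb_le_criticalProb hab le_rfl, criticalProb_le_criticalProb le_rfl hab⟩

theorem stmt_19 (a b θ : ℕ) (hθ : 2 ≤ θ) (hθa : θ < a) (hθb : θ < b) :
    ∃ pf : ℝ, 0 < pf ∧ pf < 1 ∧
      (∀ p : ℝ, pf < p → p ≤ 1 →
        Filter.Tendsto (xBP a b θ p) Filter.atTop (nhds 1) ∧
        Filter.Tendsto (yBP a b θ p) Filter.atTop (nhds 1)) ∧
      (∀ p : ℝ, 0 ≤ p → p < pf →
        (∃ xL : ℝ, xL < 1 ∧ Filter.Tendsto (xBP a b θ p) Filter.atTop (nhds xL)) ∧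
        (∃ yL : ℝ, yL < 1 ∧ Filter.Tendsto (yBP a b θ p) Filter.atTop (nhds yL))) ∧
      (a ≤ b → ∀ pa pb : ℝ, 0 < pa → pa < 1 → 0 < pb → pb < 1 →
        IsCritBP a θ pa → IsCritBP b θ pb → pb ≤ pf ∧ pf ≤ pa) := by
  obtain ⟨pf, hpos, hlt, habove, hbelow, hcomp⟩ := stmt_19_general a b θ hθ hθa.le hθb.le
  exact ⟨pf, hpos, hlt, habove, hbelow, fun hab pa pb _ _ _ _ ↦ hcomp hab pa pb⟩
end
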